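/- Let n ∈ ℕ, let L be a symmetric real n×n matrix such that N := Id + L is positive definite, let η ∈ ℝⁿ with η ≠ 0, let f ∈ ℝⁿ and y ∈ ℝ. Then (1/(2π)) ∫_ℝ ∫_{ℝⁿ} exp(iλ(⟨η, x⟩ − y)) · exp(i⟨f, x⟩) · exp(−(1/2)⟨x, L x⟩) dγⁿ(x) dλ = (2π⟨η, N⁻¹η⟩)^{−1/2} · det(N)^{−1/2} · exp(−(1/2)⟨f, N⁻¹ f⟩) · exp(−(i⟨η, N⁻¹ f⟩ − y)²/(2⟨η, N⁻¹η⟩)), where all integrals are complex-valued, ⟨η, N⁻¹η⟩ > 0 since N is positive definite, and the square (i⟨η,N⁻¹f⟩ − y)² is taken in ℂ. -/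

import Mathlib

open Matrix MeasureTheory ProbabilityTheory

/-!
The Lebesgue density `(2π)^{-n/2} exp(-|x|²/2)` of `γⁿ` turns the kernel `exp(-⟨x, Lx⟩/2)` into
`exp(-⟨x, Nx⟩/2)` with `N = 1 + L`. Factoring `N = Bᵀ B` and substituting `u = B x` reduces the
`x`-integral to the Fourier–Laplace transform of the standard Gaussian, which gives
`det N ^ {-1/2} exp(⟨w, N⁻¹ w⟩ / 2)` for every complex vector `w`. Taking `w = i (f + λ η)` and
expanding the quadratic form leaves a one-dimensional Gaussian in `λ` with variance parameter
`⟨η, N⁻¹ η⟩`, whose Fourier transform at `i ⟨η, N⁻¹ f⟩ - y` is the claimed exponential.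
-/

open scoped Real

section LinearAlgebra

variable {ι : Type*} [Fintype ι]

theorem dotProduct_mulVec_add_self_of_isSymm {R : Type*} [CommRing R] {A : Matrix ι ι R}
    (hA : A.IsSymm) (u v : ι → R) :
    (u + v) ⬝ᵥ A *ᵥ (u + v) = u ⬝ᵥ A *ᵥ u + 2 * (v ⬝ᵥ A *ᵥ u) + v ⬝ᵥ A *ᵥ v := by
  have hcomm : u ⬝ᵥ A *ᵥ v = v ⬝ᵥ A *ᵥ u := by
    rw [← dotProduct_transpose_mulVec, hA.eq]
  rw [mulVec_add, dotProduct_add, add_dotProduct, add_dotProduct, hcomm]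
  ring

theorem ofReal_dotProduct (u v : ι → ℝ) :
    ((u ⬝ᵥ v : ℝ) : ℂ) = Complex.ofReal ∘ u ⬝ᵥ Complex.ofReal ∘ v :=
  Complex.ofRealHom.map_dotProduct u v

theorem ofReal_comp_mulVec {m : Type*} (M : Matrix m ι ℝ) (v : ι → ℝ) :
    Complex.ofReal ∘ (M *ᵥ v) = M.map Complex.ofReal *ᵥ Complex.ofReal ∘ v :=
  funext fun i ↦ Complex.ofRealHom.map_mulVec M v i

variable [DecidableEq ι]

theorem exists_isUnit_eq_transpose_mul_self_of_posDef {N : Matrix ι ι ℝ} (hN : N.PosDef) :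
    ∃ B : Matrix ι ι ℝ, IsUnit B ∧ N = Bᵀ * B := by
  open scoped MatrixOrder Matrix.Norms.L2Operator in
  simpa only [star_eq_conjTranspose, conjTranspose_eq_transpose_of_trivial] using
    CStarAlgebra.isStrictlyPositive_iff_eq_star_mul_self.mp hN.isStrictlyPositive

theorem det_transpose_mul_self_rpow_neg_half (B : Matrix ι ι ℝ) :
    (Bᵀ * B).det ^ (-(1 : ℝ) / 2) = |B.det|⁻¹ := by
  rw [det_mul, det_transpose, ← abs_mul_abs_self, ← sq, neg_div, Real.rpow_neg (by positivity),
    ← Real.sqrt_eq_rpow, Real.sqrt_sq (abs_nonneg _)]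

end LinearAlgebra

section ProductMeasure

variable {ι : Type*} [Fintype ι]

theorem pi_withDensity_ofReal {α : ι → Type*} [∀ i, MeasurableSpace (α i)]
    (μ : ∀ i, Measure (α i)) [∀ i, SigmaFinite (μ i)] {p : ∀ i, α i → ℝ}
    (hp : ∀ i x, 0 ≤ p i x) (hpi : ∀ i, Integrable (p i) (μ i)) :
    Measure.pi (fun i ↦ (μ i).withDensity fun x ↦ ENNReal.ofReal (p i x)) =
      (Measure.pi μ).withDensity fun x ↦ ENNReal.ofReal (∏ i, p i (x i)) := by
  have (i : ι) : IsFiniteMeasure ((μ i).withDensity fun x ↦ ENNReal.ofReal (p i x)) :=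
    isFiniteMeasure_withDensity_ofReal (hpi i).2
  refine Measure.pi_eq fun s hs ↦ ?_
  calc (Measure.pi μ).withDensity (fun x ↦ ENNReal.ofReal (∏ i, p i (x i))) (Set.univ.pi s)
      = ENNReal.ofReal (∫ x, ∏ i, p i (x i) ∂Measure.pi fun i ↦ (μ i).restrict (s i)) := by
        rw [withDensity_apply _ (MeasurableSet.univ_pi hs), Measure.restrict_pi_pi,
          ← ofReal_integral_eq_lintegral_ofReal
            (Integrable.fintype_prod_dep fun i ↦ (hpi i).restrict)
            (ae_of_all _ fun x ↦ Finset.prod_nonneg fun i _ ↦ hp i (x i))]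
    _ = ∏ i, ENNReal.ofReal (∫ x in s i, p i x ∂μ i) := by
        rw [integral_fintype_prod_eq_prod,
          ENNReal.ofReal_prod_of_nonneg fun i _ ↦ integral_nonneg (hp i)]
    _ = ∏ i, (μ i).withDensity (fun x ↦ ENNReal.ofReal (p i x)) (s i) := by
        refine Finset.prod_congr rfl fun i _ ↦ ?_
        rw [withDensity_apply _ (hs i), ofReal_integral_eq_lintegral_ofReal
          (hpi i).restrict (ae_of_all _ (hp i))]

theorem prod_gaussianPDFReal_zero_one (x : ι → ℝ) :
    ∏ i, gaussianPDFReal 0 1 (x i) =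
      (2 * π) ^ (-(Fintype.card ι : ℝ) / 2) * Real.exp (-(1 / 2) * (x ⬝ᵥ x)) := by
  have hpdf (t : ℝ) : gaussianPDFReal 0 1 t = (√(2 * π))⁻¹ * Real.exp (-(1 / 2) * (t * t)) := by
    simp only [gaussianPDFReal, NNReal.coe_one, mul_one, sub_zero]
    ring_nf
  have hconst : (√(2 * π))⁻¹ ^ Fintype.card ι = (2 * π) ^ (-(Fintype.card ι : ℝ) / 2) := by
    rw [Real.sqrt_eq_rpow, ← Real.rpow_neg (by positivity),
      ← Real.rpow_mul_natCast (by positivity)]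
    ring_nf
  simp only [hpdf, Finset.prod_mul_distrib, ← Real.exp_sum, Finset.prod_const, Finset.card_univ,
    hconst, dotProduct, Finset.mul_sum]

variable {E : Type*} [NormedAddCommGroup E] [NormedSpace ℝ E]

theorem integral_pi_gaussianReal_zero_one (g : (ι → ℝ) → E) :
    ∫ x, g x ∂Measure.pi (fun _ : ι ↦ gaussianReal 0 1) =
      (2 * π) ^ (-(Fintype.card ι : ℝ) / 2) •
        ∫ x : ι → ℝ, Real.exp (-(1 / 2) * (x ⬝ᵥ x)) • g x := by
  have hdensity : Measure.pi (fun _ : ι ↦ gaussianReal 0 1) =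
      volume.withDensity fun x ↦ ENNReal.ofReal (∏ i, gaussianPDFReal 0 1 (x i)) := by
    rw [gaussianReal_of_var_ne_zero 0 one_ne_zero]
    exact pi_withDensity_ofReal _ (fun _ ↦ gaussianPDFReal_nonneg 0 1)
      fun _ ↦ integrable_gaussianPDFReal 0 1
  rw [hdensity, integral_withDensity_eq_integral_toReal_smul (by fun_prop)
    (ae_of_all _ fun _ ↦ ENNReal.ofReal_lt_top), ← integral_smul]
  congr with x
  rw [ENNReal.toReal_ofReal (Finset.prod_nonneg fun i _ ↦ gaussianPDFReal_nonneg 0 1 _),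
    prod_gaussianPDFReal_zero_one, mul_smul]

theorem integral_comp_mulVec [DecidableEq ι] {M : Matrix ι ι ℝ} (hM : IsUnit M)
    (g : (ι → ℝ) → E) :
    ∫ x, g (M *ᵥ x) = |M.det|⁻¹ • ∫ x, g x := by
  have hdet : M.det ≠ 0 := (M.isUnit_iff_isUnit_det.mp hM).ne_zero
  have hemb : MeasurableEmbedding (toLin' M) :=
    (toLin' M).continuous_of_finiteDimensional.measurableEmbedding (mulVec_injective_of_isUnit hM)
  calc ∫ x, g (M *ᵥ x) = ∫ x, g x ∂Measure.map (toLin' M) volume := (hemb.integral_map g).symm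
    _ = |M.det|⁻¹ • ∫ x, g x := by
      rw [Real.map_matrix_volume_pi_eq_smul_volume_pi hdet, integral_smul_measure,
        ENNReal.toReal_ofReal (abs_nonneg _), abs_inv]

end ProductMeasure

section GaussianIntegral

open Complex

theorem ofReal_mul_cpow {r : ℝ} (hr : 0 < r) {z : ℂ} (hz : z ≠ 0) (s : ℂ) :
    (r * z) ^ s = (r : ℂ) ^ s * z ^ s := by
  have hr' : (r : ℂ) ≠ 0 := ofReal_ne_zero.mpr hr.ne'
  rw [cpow_def_of_ne_zero (mul_ne_zero hr' hz), cpow_def_of_ne_zero hr', cpow_def_of_ne_zero hz,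
    log_ofReal_mul hr hz, ofReal_log hr.le, add_mul, Complex.exp_add]

theorem inv_two_pi_mul_integral_cexp_I_mul_cexp_neg_half_mul_sq {a : ℂ} (ha : 0 < a.re) (z : ℂ) :
    1 / (2 * π) * ∫ l : ℝ, cexp (I * z * l) * cexp (-(a / 2) * l ^ 2) =
      (2 * π * a) ^ (-(1 : ℂ) / 2) * cexp (-z ^ 2 / (2 * a)) := by
  have hre : 0 < (2 * π * a).re := by
    rw [← ofReal_ofNat, ← ofReal_mul, re_ofReal_mul]
    positivity
  have hne : 2 * π * a ≠ 0 := fun h ↦ by simp [h] at hre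
  have hsqrt : (π / (a / 2)) ^ (1 / 2 : ℂ) = 2 * π * (2 * π * a) ^ (-(1 : ℂ) / 2) :=
    calc (π / (a / 2)) ^ (1 / 2 : ℂ)
        = (((2 * π) ^ 2 : ℝ) * (2 * π * a)⁻¹) ^ (1 / 2 : ℂ) := by
          push_cast
          congr 1
          field_simp
      _ = (((2 * π) ^ 2 : ℝ) : ℂ) ^ (1 / 2 : ℂ) * ((2 * π * a) ^ (1 / 2 : ℂ))⁻¹ := by
          rw [ofReal_mul_cpow (by positivity) (inv_ne_zero hne),
            inv_cpow _ _ (slitPlane_arg_ne_pi (.inl hre))]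
      _ = 2 * π * (2 * π * a) ^ (-(1 : ℂ) / 2) := by
          rw [neg_div, cpow_neg, one_div, ofReal_pow, sq_cpow_two_inv (by simp [Real.pi_pos])]
          push_cast
          rfl
  rw [fourierIntegral_gaussian (by simpa using ha), hsqrt]
  field_simp
  ring_nf

variable {ι : Type*} [Fintype ι]

theorem integral_cexp_neg_half_dotProduct_self_add (c : ι → ℂ) :
    ∫ u : ι → ℝ, cexp (-(1 / 2) * ((u ⬝ᵥ u : ℝ) : ℂ) + c ⬝ᵥ ofReal ∘ u) =
      (((2 * π) ^ ((Fintype.card ι : ℝ) / 2) : ℝ) : ℂ) * cexp (1 / 2 * (c ⬝ᵥ c)) := by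
  have h := GaussianFourier.integral_cexp_neg_mul_sum_add (b := 1 / 2) (by norm_num) c
  convert! h using 1
  · simp [dotProduct, sq]
  · congr 2
    · rw [ofReal_cpow (by positivity)]
      push_cast
      congr 1
      ring
    · simp only [dotProduct, sq]
      ring

variable [DecidableEq ι]

theorem integral_cexp_neg_half_dotProduct_mulVec_add {N : Matrix ι ι ℝ} (hN : N.PosDef)
    (w : ι → ℂ) :
    ∫ x : ι → ℝ, cexp (-(1 / 2) * ((x ⬝ᵥ N *ᵥ x : ℝ) : ℂ) + w ⬝ᵥ ofReal ∘ x) =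
      (((2 * π) ^ ((Fintype.card ι : ℝ) / 2) : ℝ) : ℂ) * ((N.det ^ (-(1 : ℝ) / 2) : ℝ) : ℂ) *
        cexp (1 / 2 * (w ⬝ᵥ N⁻¹.map ofReal *ᵥ w)) := by
  obtain ⟨B, hB, rfl⟩ := exists_isUnit_eq_transpose_mul_self_of_posDef hN
  set c : ι → ℂ := w ᵥ* B⁻¹.map ofReal with hc
  have hlin (x : ι → ℝ) : c ⬝ᵥ ofReal ∘ (B *ᵥ x) = w ⬝ᵥ ofReal ∘ x := by
    rw [hc, ← dotProduct_mulVec, ← ofReal_comp_mulVec, mulVec_mulVec,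
      nonsing_inv_mul _ (B.isUnit_iff_isUnit_det.mp hB), one_mulVec]
  have hquad (x : ι → ℝ) : (B *ᵥ x) ⬝ᵥ (B *ᵥ x) = x ⬝ᵥ (Bᵀ * B) *ᵥ x := by
    rw [← mulVec_mulVec, dotProduct_transpose_mulVec]
  have hinv : c ⬝ᵥ c = w ⬝ᵥ (Bᵀ * B)⁻¹.map ofReal *ᵥ w := by
    have hmap : (Bᵀ * B)⁻¹.map ofReal = B⁻¹.map ofReal * (B⁻¹.map ofReal)ᵀ := by
      rw [Matrix.mul_inv_rev, ← transpose_nonsing_inv, ← Matrix.transpose_map]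
      exact Matrix.map_mul (f := ofRealHom)
    rw [hmap, ← mulVec_mulVec, mulVec_transpose, dotProduct_mulVec]
  calc ∫ x : ι → ℝ, cexp (-(1 / 2) * ((x ⬝ᵥ (Bᵀ * B) *ᵥ x : ℝ) : ℂ) + w ⬝ᵥ ofReal ∘ x)
      = ∫ x : ι → ℝ, cexp (-(1 / 2) * (((B *ᵥ x) ⬝ᵥ (B *ᵥ x) : ℝ) : ℂ) +
          c ⬝ᵥ ofReal ∘ (B *ᵥ x)) := by simp only [hlin, hquad]
    _ = |B.det|⁻¹ • ∫ u : ι → ℝ, cexp (-(1 / 2) * ((u ⬝ᵥ u : ℝ) : ℂ) + c ⬝ᵥ ofReal ∘ u) :=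
        integral_comp_mulVec hB fun u ↦
          cexp (-(1 / 2) * ((u ⬝ᵥ u : ℝ) : ℂ) + c ⬝ᵥ ofReal ∘ u)
    _ = _ := by
        rw [integral_cexp_neg_half_dotProduct_self_add, hinv,
          det_transpose_mul_self_rpow_neg_half, real_smul]
        ring

variable {L : Matrix ι ι ℝ}

theorem integral_pi_gaussianReal_cexp_mul_cexp_quadratic (hL : (1 + L).PosDef) (w : ι → ℂ) :
    ∫ x, cexp (w ⬝ᵥ ofReal ∘ x) * cexp (-(1 / 2) * ((x ⬝ᵥ L *ᵥ x : ℝ) : ℂ))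
        ∂Measure.pi (fun _ : ι ↦ gaussianReal 0 1) =
      (((1 + L).det ^ (-(1 : ℝ) / 2) : ℝ) : ℂ) *
        cexp (1 / 2 * (w ⬝ᵥ (1 + L)⁻¹.map ofReal *ᵥ w)) := by
  have hcombine (x : ι → ℝ) :
      Real.exp (-(1 / 2) * (x ⬝ᵥ x)) •
          (cexp (w ⬝ᵥ ofReal ∘ x) * cexp (-(1 / 2) * ((x ⬝ᵥ L *ᵥ x : ℝ) : ℂ))) =
        cexp (-(1 / 2) * ((x ⬝ᵥ (1 + L) *ᵥ x : ℝ) : ℂ) + w ⬝ᵥ ofReal ∘ x) := by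
    rw [real_smul, ofReal_exp, ← Complex.exp_add, ← Complex.exp_add, add_mulVec, one_mulVec,
      dotProduct_add]
    push_cast
    ring_nf
  have hnorm :
      (2 * π) ^ (-(Fintype.card ι : ℝ) / 2) * (2 * π) ^ ((Fintype.card ι : ℝ) / 2) = 1 := by
    rw [neg_div, Real.rpow_neg (by positivity), inv_mul_cancel₀ (by positivity)]
  simp only [integral_pi_gaussianReal_zero_one, hcombine,
    integral_cexp_neg_half_dotProduct_mulVec_add hL, real_smul]
  rw [← mul_assoc, ← mul_assoc, ← ofReal_mul, hnorm, ofReal_one, one_mul]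

theorem integral_pi_gaussianReal_donsker_integrand (hL : (1 + L).PosDef) (η f : ι → ℂ)
    (l y : ℂ) :
    ∫ x : ι → ℝ, cexp (I * l * (η ⬝ᵥ ofReal ∘ x - y)) * cexp (I * (f ⬝ᵥ ofReal ∘ x)) *
        cexp (-(1 / 2) * ((x ⬝ᵥ L *ᵥ x : ℝ) : ℂ)) ∂Measure.pi (fun _ : ι ↦ gaussianReal 0 1) =
      (((1 + L).det ^ (-(1 : ℝ) / 2) : ℝ) : ℂ) *
        cexp (-(1 / 2) * (f ⬝ᵥ (1 + L)⁻¹.map ofReal *ᵥ f)) *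
        (cexp (I * (I * (η ⬝ᵥ (1 + L)⁻¹.map ofReal *ᵥ f) - y) * l) *
          cexp (-((η ⬝ᵥ (1 + L)⁻¹.map ofReal *ᵥ η) / 2) * l ^ 2)) := by
  have hsymm : ((1 + L)⁻¹.map ofReal).IsSymm :=
    (isHermitian_iff_isSymm.mp hL.isHermitian.inv).map ofReal
  have hsplit (x : ι → ℝ) :
      cexp (I * l * (η ⬝ᵥ ofReal ∘ x - y)) * cexp (I * (f ⬝ᵥ ofReal ∘ x)) =
        cexp (-(I * l * y)) * cexp ((I • (f + l • η)) ⬝ᵥ ofReal ∘ x) := by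
    rw [← Complex.exp_add, ← Complex.exp_add, smul_dotProduct, add_dotProduct, smul_dotProduct,
      smul_eq_mul, smul_eq_mul]
    ring_nf
  simp_rw [hsplit, mul_assoc (cexp _) (cexp _), integral_const_mul]
  rw [integral_pi_gaussianReal_cexp_mul_cexp_quadratic hL, mul_left_comm, mul_assoc (ofReal _)]
  simp only [← Complex.exp_add, mulVec_smul, smul_dotProduct, dotProduct_smul, smul_eq_mul,
    dotProduct_mulVec_add_self_of_isSymm hsymm]
  congr 2
  linear_combination (1 / 2 * (f ⬝ᵥ (1 + L)⁻¹.map ofReal *ᵥ f) +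
    1 / 2 * l ^ 2 * (η ⬝ᵥ (1 + L)⁻¹.map ofReal *ᵥ η)) * I_mul_I

theorem gauss_kernel_donsker_T_transform_general (hL : (1 + L).PosDef) {η : ι → ℂ}
    (hη : 0 < (η ⬝ᵥ (1 + L)⁻¹.map ofReal *ᵥ η).re) (f : ι → ℂ) (y : ℂ) :
    1 / (2 * π) *
        ∫ l : ℝ, ∫ x : ι → ℝ,
          cexp (I * l * (η ⬝ᵥ ofReal ∘ x - y)) * cexp (I * (f ⬝ᵥ ofReal ∘ x)) *
            cexp (-(1 / 2) * ((x ⬝ᵥ L *ᵥ x : ℝ) : ℂ))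
          ∂Measure.pi (fun _ : ι ↦ gaussianReal 0 1) =
      (2 * π * (η ⬝ᵥ (1 + L)⁻¹.map ofReal *ᵥ η)) ^ (-(1 : ℂ) / 2) *
        (((1 + L).det ^ (-(1 : ℝ) / 2) : ℝ) : ℂ) *
        cexp (-(1 / 2) * (f ⬝ᵥ (1 + L)⁻¹.map ofReal *ᵥ f)) *
        cexp (-(I * (η ⬝ᵥ (1 + L)⁻¹.map ofReal *ᵥ f) - y) ^ 2 /
          (2 * (η ⬝ᵥ (1 + L)⁻¹.map ofReal *ᵥ η))) := by
  simp only [integral_pi_gaussianReal_donsker_integrand hL, integral_const_mul]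
  rw [mul_left_comm, inv_two_pi_mul_integral_cexp_I_mul_cexp_neg_half_mul_sq hη]
  ring

end GaussianIntegral

/-- Finite-dimensional version of the T-transform of `exp(-(1/2)⟨·,L·⟩)·δ₀(⟨η,·⟩-y)`:
for a symmetric `L` with `N = Id + L` positive definite, `η ≠ 0`, `f ∈ ℝⁿ`, `y ∈ ℝ`,
`(1/2π)∫∫ exp(iλ(⟨η,x⟩-y))·exp(i⟨f,x⟩)·exp(-(1/2)⟨x,Lx⟩) dγⁿ(x) dλ
 = (2π⟨η,N⁻¹η⟩)^{-1/2}·det(N)^{-1/2}·exp(-(1/2)⟨f,N⁻¹f⟩)·exp(-(i⟨η,N⁻¹f⟩-y)²/(2⟨η,N⁻¹η⟩))`. -/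
theorem gauss_kernel_donsker_T_transform
    (n : ℕ) (L : Matrix (Fin n) (Fin n) ℝ) (hsymm : L.IsSymm)
    (N : Matrix (Fin n) (Fin n) ℝ) (hN : N = 1 + L) (hpos : N.PosDef)
    (η : Fin n → ℝ) (hη : η ≠ 0) (f : Fin n → ℝ) (y : ℝ)
    (γ : Measure (Fin n → ℝ)) (hγ : γ = Measure.pi fun _ => gaussianReal 0 1) :
    (1 / (2 * Real.pi) : ℂ) *
        ∫ l : ℝ, ∫ x : Fin n → ℝ,
            Complex.exp (Complex.I * (l : ℂ) * (((η ⬝ᵥ x : ℝ) : ℂ) - (y : ℂ))) *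
              Complex.exp (Complex.I * ((f ⬝ᵥ x : ℝ) : ℂ)) *
              Complex.exp (-(1 / 2 : ℂ) * ((x ⬝ᵥ L.mulVec x : ℝ) : ℂ)) ∂γ =
      (((2 * Real.pi * (η ⬝ᵥ N⁻¹.mulVec η)) ^ (-(1 : ℝ) / 2) : ℝ) : ℂ) *
        ((N.det ^ (-(1 : ℝ) / 2) : ℝ) : ℂ) *
        Complex.exp (-(1 / 2 : ℂ) * ((f ⬝ᵥ N⁻¹.mulVec f : ℝ) : ℂ)) *
        Complex.exp (-(Complex.I * ((η ⬝ᵥ N⁻¹.mulVec f : ℝ) : ℂ) - (y : ℂ)) ^ 2 /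
          (2 * ((η ⬝ᵥ N⁻¹.mulVec η : ℝ) : ℂ))) := by
  subst hN hγ
  have hpos_η : 0 < η ⬝ᵥ (1 + L)⁻¹ *ᵥ η := by simpa using hpos.inv.dotProduct_mulVec_pos hη
  rw [Complex.ofReal_cpow (by positivity)]
  simpa [ofReal_dotProduct, ofReal_comp_mulVec] using
    gauss_kernel_donsker_T_transform_general hpos (η := Complex.ofReal ∘ η)
      (by rwa [← ofReal_comp_mulVec, ← ofReal_dotProduct, Complex.ofReal_re])
      (Complex.ofReal ∘ f) y
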